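/- Let H n denote the number of head normal forms of size n. Then the sequence n ↦ H n · ρ^n · n^{3/2} converges to C_H = C · ρ/(1 − ρ) ≈ 0.2546259 as n → ∞; that is, H n ∼ (1/ρ)^n · C_H / n^{3/2}. -/

import Mathlib

/-- Lambda terms with de Bruijn indices. -/
inductive Term : Type
  | var : ℕ → Term
  | app : Term → Term → Term
  | abs : Term → Term

namespace Term

/-- Natural size: every operator (zero, successor, application, abstraction) has size 1. -/
def size : Term → ℕ
  | var k => k + 1
  | app M N => M.size + N.size + 1
  | abs M => M.size + 1

end Term

/-- `L n` is the number of lambda terms of size `n`. -/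
noncomputable def L (n : ℕ) : ℕ := Nat.card {t : Term // t.size = n}


/-- Neutral head normal forms: terms of the form `app (app … (app (var k) N₁) …) N_p`
with `p ≥ 0` and arbitrary terms `N₁, …, N_p`. -/
inductive IsNeutralHnf : Term → Prop
  | var (k : ℕ) : IsNeutralHnf (Term.var k)
  | app {m : Term} (n : Term) : IsNeutralHnf m → IsNeutralHnf (Term.app m n)

/-- `K n` is the number of neutral head normal forms of size `n`. -/
noncomputable def K (n : ℕ) : ℕ := Nat.card {t : Term // IsNeutralHnf t ∧ t.size = n}

/-- Head normal forms: terms of the form `abs (abs … (abs K) …)` (zero or more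
abstractions) where `K` is a neutral head normal form. -/
inductive IsHnf : Term → Prop
  | of_neutral {t : Term} : IsNeutralHnf t → IsHnf t
  | abs {t : Term} : IsHnf t → IsHnf (Term.abs t)

/-- `H n` is the number of head normal forms of size `n`. -/
noncomputable def H (n : ℕ) : ℕ := Nat.card {t : Term // IsHnf t ∧ t.size = n}

/-!
A neutral head normal form is a variable or an application whose left part is neutral, and a head
normal form is a neutral one under abstractions: `K = X / (1 - X) + X * K * L` and `H = K + X * H`
for the generating functions. Comparing with `L = X / (1 - X) + X * L ^ 2 + X * L` yields
`K = X * (1 + L)`, and `H = K / (1 - X)`, so everything reduces to the asymptotics of `L`.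

The quadratic equation for `L` has discriminant `(1 - 3X - X² - X³) / (1 - X)`. After rescaling `X`
by `ρ`, its square root is `(1 - X) ^ (1 / 2)` times a series whose coefficients decay
geometrically. The coefficients of `(1 - X) ^ (1 / 2)` are asymptotic to `-n ^ (-3 / 2) / (2√π)` by
Euler's product for `Γ(-1 / 2)`, and multiplication by a series with summable coefficients
multiplies this constant by the value of that series at `1`.
-/

open Filter Topology PowerSeries
open scoped ComplexConjugate
open Finset.HasAntidiagonal (antidiagonal mem_antidiagonal)

namespace Term

theorem size_pos (t : Term) : 0 < t.size := by
  cases t <;> simp [size]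

theorem finite_setOf_size_le (n : ℕ) : {t : Term | t.size ≤ n}.Finite := by
  induction n with
  | zero => exact Set.finite_empty.subset fun t ht => (size_pos t).not_ge ht
  | succ n ih =>
    refine (((Set.finite_Iic n).image var).union
      ((ih.image2 app ih).union (ih.image abs))).subset ?_
    rintro (k | ⟨M, N⟩ | M) ht <;> simp only [Set.mem_ofPred_eq, size] at ht
    · exact .inl ⟨k, Nat.le_of_succ_le_succ ht, rfl⟩
    · exact .inr (.inl ⟨M, show M.size ≤ n by lia, N, show N.size ≤ n by lia, rfl⟩)
    · exact .inr (.inr ⟨M, Nat.le_of_succ_le_succ ht, rfl⟩)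

instance finite_of_size_eq (P : Term → Prop) (n : ℕ) : Finite {t : Term // P t ∧ t.size = n} :=
  ((finite_setOf_size_le n).subset fun _ ht => ht.2.le).to_subtype

/-- The number of terms of size `n` satisfying `P`; `L`, `K` and `H` are the instances where `P`
is trivial, `IsNeutralHnf` and `IsHnf`. -/
noncomputable def count (P : Term → Prop) (n : ℕ) : ℕ :=
  Nat.card {t : Term // P t ∧ t.size = n}

theorem count_zero (P : Term → Prop) : count P 0 = 0 := by
  have : IsEmpty {t : Term // P t ∧ t.size = 0} := ⟨fun t => (size_pos t.1).ne' t.2.2⟩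
  exact Nat.card_of_isEmpty

theorem count_false (n : ℕ) : count (fun _ => False) n = 0 := by
  simp [count]

section Decomposition

variable {P Q R S : Term → Prop}

/-- Decomposition of the terms of size `n + 1` in a class `P` by their root constructor. Since
`var n` is the only variable of that size, variables contribute a single point. -/
def sizeSuccEquiv (hvar : ∀ k, P (var k)) (happ : ∀ M N, P (app M N) ↔ Q M ∧ R N)
    (habs : ∀ M, P (abs M) ↔ S M) (n : ℕ) :
    {t : Term // P t ∧ t.size = n + 1} ≃
      Unit ⊕ (Σ p : antidiagonal n,
        {t : Term // Q t ∧ t.size = p.1.1} × {t : Term // R t ∧ t.size = p.1.2}) ⊕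
      {t : Term // S t ∧ t.size = n} where
  toFun
    | ⟨var _, _⟩ => .inl ()
    | ⟨app M N, h⟩ => .inr (.inl ⟨⟨(M.size, N.size), mem_antidiagonal.2 (Nat.succ.inj h.2)⟩,
        ⟨M, ((happ M N).1 h.1).1, rfl⟩, ⟨N, ((happ M N).1 h.1).2, rfl⟩⟩)
    | ⟨abs M, h⟩ => .inr (.inr ⟨M, (habs M).1 h.1, Nat.succ.inj h.2⟩)
  invFun
    | .inl _ => ⟨var n, hvar n, rfl⟩
    | .inr (.inl ⟨p, M, N⟩) => ⟨app M.1 N.1, (happ _ _).2 ⟨M.2.1, N.2.1⟩, by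
        rw [size, M.2.2, N.2.2, mem_antidiagonal.1 p.2]⟩
    | .inr (.inr M) => ⟨abs M.1, (habs _).2 M.2.1, by rw [size, M.2.2]⟩
  left_inv := by
    rintro ⟨k | ⟨M, N⟩ | M, h⟩
    · obtain rfl : k = n := Nat.succ.inj h.2
      rfl
    · rfl
    · rfl
  right_inv := by
    rintro (_ | ⟨⟨⟨i, j⟩, hij⟩, ⟨M, hM, hi⟩, ⟨N, hN, hj⟩⟩ | M)
    · rfl
    · dsimp only at hi hj
      subst hi hj
      rfl
    · rfl

theorem count_succ (hvar : ∀ k, P (var k)) (happ : ∀ M N, P (app M N) ↔ Q M ∧ R N)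
    (habs : ∀ M, P (abs M) ↔ S M) (n : ℕ) :
    count P (n + 1) = 1 + ∑ p ∈ antidiagonal n, count Q p.1 * count R p.2 + count S n := by
  have hpairs : Nat.card (Σ p : antidiagonal n,
      {t : Term // Q t ∧ t.size = p.1.1} × {t : Term // R t ∧ t.size = p.1.2}) =
      ∑ p ∈ antidiagonal n, count Q p.1 * count R p.2 := by
    rw [Nat.card_sigma]
    simp only [Nat.card_prod]
    exact Finset.sum_coe_sort (antidiagonal n) fun p => count Q p.1 * count R p.2
  rw [count, Nat.card_congr (sizeSuccEquiv hvar happ habs n), Nat.card_sum, Nat.card_sum, hpairs,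
    Nat.card_unique, ← add_assoc, count]

end Decomposition

end Term

theorem isNeutralHnf_app_iff {M N : Term} : IsNeutralHnf (.app M N) ↔ IsNeutralHnf M :=
  ⟨fun h => by cases h; assumption, .app N⟩

theorem not_isNeutralHnf_abs {M : Term} : ¬ IsNeutralHnf (.abs M) := nofun

theorem isHnf_app_iff {M N : Term} : IsHnf (.app M N) ↔ IsNeutralHnf M :=
  ⟨fun | .of_neutral h => isNeutralHnf_app_iff.1 h, fun h => .of_neutral (.app N h)⟩

theorem isHnf_abs_iff {M : Term} : IsHnf (.abs M) ↔ IsHnf M :=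
  ⟨fun | .abs h => h, .abs⟩

theorem L_eq_count : L = Term.count fun _ => True := by
  ext n
  simp only [L, Term.count, true_and]

theorem L_zero : L 0 = 0 := by
  rw [L_eq_count, Term.count_zero]

theorem K_zero : K 0 = 0 := Term.count_zero IsNeutralHnf

theorem H_zero : H 0 = 0 := Term.count_zero IsHnf

theorem L_succ (n : ℕ) : L (n + 1) = 1 + ∑ p ∈ antidiagonal n, L p.1 * L p.2 + L n := by
  rw [L_eq_count]
  exact Term.count_succ (by simp) (by simp) (by simp) n

theorem K_succ (n : ℕ) : K (n + 1) = 1 + ∑ p ∈ antidiagonal n, K p.1 * L p.2 := by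
  rw [L_eq_count]
  have h := Term.count_succ (P := IsNeutralHnf) (Q := IsNeutralHnf) (R := fun _ => True)
    (S := fun _ => False) .var (by simp [isNeutralHnf_app_iff]) (by simp [not_isNeutralHnf_abs]) n
  rwa [Term.count_false, add_zero] at h

theorem H_succ (n : ℕ) : H (n + 1) = K (n + 1) + H n := by
  rw [K_succ, L_eq_count]
  exact Term.count_succ (fun k => .of_neutral (.var k)) (by simp [isHnf_app_iff])
    (fun _ => isHnf_abs_iff) n

section GeneratingFunctions

variable (R : Type*) [CommRing R]

/-- The ordinary generating function of a counting sequence, with coefficients in `R`. -/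
noncomputable def genFun (a : ℕ → ℕ) : R⟦X⟧ := mk fun n => (a n : R)

@[simp]
theorem coeff_genFun (a : ℕ → ℕ) (n : ℕ) : coeff n (genFun R a) = a n := coeff_mk _ _

@[simp]
theorem constantCoeff_genFun (a : ℕ → ℕ) : constantCoeff (genFun R a) = a 0 := by
  rw [← coeff_zero_eq_constantCoeff_apply, coeff_genFun]

theorem genFun_L_eq :
    genFun R L = X * (mk 1 + genFun R L * genFun R L + genFun R L) := by
  ext (_ | n)
  · simp [L_zero]
  · rw [coeff_succ_X_mul]
    simp [coeff_mul, L_succ]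

theorem genFun_K_eq : genFun R K = X * (mk 1 + genFun R K * genFun R L) := by
  ext (_ | n)
  · simp [K_zero]
  · rw [coeff_succ_X_mul]
    simp [coeff_mul, K_succ]

theorem genFun_H_eq : genFun R H = genFun R K + X * genFun R H := by
  ext (_ | n)
  · simp [H_zero, K_zero]
  · simp [coeff_succ_X_mul, H_succ]

theorem genFun_K_eq_X_mul_one_add_genFun_L : genFun R K = X * (1 + genFun R L) := by
  have hunit : IsUnit (1 - X * genFun R L) := by
    simp [isUnit_iff_constantCoeff]
  refine hunit.mul_right_cancel ?_
  linear_combination genFun_K_eq R - X * genFun_L_eq R + X * mk_one_mul_one_sub_eq_one R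

/-- Completing the square in the quadratic equation for the generating function of `L`. -/
theorem genFun_L_discriminant :
    (1 - X - 2 * X * genFun R L) ^ 2 * (1 - X) = 1 - 3 * X - X ^ 2 - X ^ 3 := by
  linear_combination (1 - X) * (-4 * X) * genFun_L_eq R - 4 * X ^ 2 * mk_one_mul_one_sub_eq_one R

end GeneratingFunctions

theorem K_add_two (n : ℕ) : K (n + 2) = L (n + 1) := by
  have h := congrArg (coeff (n + 2)) (genFun_K_eq_X_mul_one_add_genFun_L ℤ)
  simpa [coeff_succ_X_mul, coeff_one] using h


section RPowWeights

theorem natCast_add_one_rpow_le_mul {s : ℝ} (hs : 0 ≤ s) (i j : ℕ) :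
    ((i + j : ℕ) + 1 : ℝ) ^ s ≤ ((i : ℝ) + 1) ^ s * ((j : ℝ) + 1) ^ s := by
  rw [← Real.mul_rpow (by positivity) (by positivity)]
  gcongr
  push_cast
  nlinarith [mul_nonneg (Nat.cast_nonneg (α := ℝ) i) (Nat.cast_nonneg (α := ℝ) j)]

theorem tendsto_natCast_add_rpow_smul_iff {E : Type*} [NormedAddCommGroup E] [NormedSpace ℝ E]
    {a : ℕ → E} {c : E} (s : ℝ) (k : ℕ) :
    Tendsto (fun n : ℕ => ((n : ℝ) + k) ^ s • a n) atTop (𝓝 c) ↔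
      Tendsto (fun n : ℕ => (n : ℝ) ^ s • a n) atTop (𝓝 c) := by
  have hratio : Tendsto (fun n : ℕ => ((n : ℝ) / (n + k)) ^ s) atTop (𝓝 1) := by
    simpa using (tendsto_natCast_div_add_atTop (k : ℝ)).rpow_const (p := s) (.inl one_ne_zero)
  have hratio_inv : Tendsto (fun n : ℕ => (((n : ℝ) / (n + k)) ^ s)⁻¹) atTop (𝓝 1) := by
    simpa using hratio.inv₀ one_ne_zero
  constructor <;> intro h
  · refine (by simpa using hratio.smul h : Tendsto _ atTop (𝓝 c)).congr' ?_
    filter_upwards [eventually_gt_atTop 0] with n hn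
    have : (0 : ℝ) < n := by exact_mod_cast hn
    rw [smul_smul, ← Real.mul_rpow (by positivity) (by positivity),
      div_mul_cancel₀ _ (by positivity)]
  · refine (by simpa using hratio_inv.smul h : Tendsto _ atTop (𝓝 c)).congr' ?_
    filter_upwards [eventually_gt_atTop 0] with n hn
    have : (0 : ℝ) < n := by exact_mod_cast hn
    rw [smul_smul, Real.div_rpow (by positivity) (by positivity), inv_div,
      div_mul_cancel₀ _ (by positivity)]

theorem tendsto_natCast_rpow_smul_shift_iff {E : Type*} [NormedAddCommGroup E] [NormedSpace ℝ E]
    {a : ℕ → E} {c : E} (s : ℝ) (k : ℕ) :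
    Tendsto (fun n : ℕ => (n : ℝ) ^ s • a (n + k)) atTop (𝓝 c) ↔
      Tendsto (fun n : ℕ => (n : ℝ) ^ s • a n) atTop (𝓝 c) := by
  rw [← tendsto_natCast_add_rpow_smul_iff s k,
    ← tendsto_add_atTop_iff_nat (f := fun n : ℕ => (n : ℝ) ^ s • a n) k]
  simp only [Nat.cast_add]

theorem exists_forall_natCast_add_one_rpow_mul_norm_le {E : Type*} [NormedAddCommGroup E]
    [NormedSpace ℝ E] {a : ℕ → E} {c : E} {s : ℝ}
    (ha : Tendsto (fun n : ℕ => (n : ℝ) ^ s • a n) atTop (𝓝 c)) :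
    ∃ B, ∀ n : ℕ, ((n : ℝ) + 1) ^ s * ‖a n‖ ≤ B := by
  have ha_one := (tendsto_natCast_add_rpow_smul_iff s 1).2 ha
  obtain ⟨B, hB⟩ := (Metric.isBounded_range_of_tendsto _ ha_one).exists_norm_le
  refine ⟨B, fun n => le_of_eq_of_le ?_ (hB _ ⟨n, rfl⟩)⟩
  rw [norm_smul, Real.norm_of_nonneg (by positivity), Nat.cast_one]

variable {A : Type*} [NormedRing A]

theorem norm_natCast_rpow_smul_mul_le [NormedAlgebra ℝ A] {s : ℝ} (hs : 0 ≤ s) (i j : ℕ)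
    (x y : A) :
    ‖((i + j : ℕ) : ℝ) ^ s • (x * y)‖ ≤
      (((i : ℝ) + 1) ^ s * ‖x‖) * (((j : ℝ) + 1) ^ s * ‖y‖) := by
  calc ‖((i + j : ℕ) : ℝ) ^ s • (x * y)‖
      ≤ ((i + j : ℕ) + 1 : ℝ) ^ s * (‖x‖ * ‖y‖) := by
        rw [norm_smul, Real.norm_of_nonneg (by positivity)]
        gcongr
        · simp
        · exact norm_mul_le _ _
    _ ≤ ((i : ℝ) + 1) ^ s * ((j : ℝ) + 1) ^ s * (‖x‖ * ‖y‖) := by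
        gcongr
        exact natCast_add_one_rpow_le_mul hs i j
    _ = (((i : ℝ) + 1) ^ s * ‖x‖) * (((j : ℝ) + 1) ^ s * ‖y‖) := mul_mul_mul_comm ..

/-- Absolute summability of the coefficients of `f` against the weight `(n + 1) ^ s`. For `s ≥ 0`
the weight is submultiplicative, so these power series form an algebra on which evaluation at `1`
makes sense. -/
def RPowSummable (s : ℝ) (f : A⟦X⟧) : Prop :=
  Summable fun n : ℕ => ((n : ℝ) + 1) ^ s * ‖coeff n f‖

namespace RPowSummable

variable {s : ℝ} {f g : A⟦X⟧}

theorem mul (hs : 0 ≤ s) (hf : RPowSummable s f) (hg : RPowSummable s g) :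
    RPowSummable s (f * g) := by
  refine (summable_norm_sum_mul_antidiagonal_of_summable_norm hf.norm hg.norm).of_nonneg_of_le
    (fun n => by positivity) fun n => ?_
  rw [Real.norm_of_nonneg (Finset.sum_nonneg fun p _ => by positivity), coeff_mul]
  calc ((n : ℝ) + 1) ^ s * ‖∑ p ∈ antidiagonal n, coeff p.1 f * coeff p.2 g‖
      ≤ ((n : ℝ) + 1) ^ s * ∑ p ∈ antidiagonal n, ‖coeff p.1 f‖ * ‖coeff p.2 g‖ := by
        gcongr
        exact norm_sum_le_of_le _ fun p _ => norm_mul_le _ _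
    _ = ∑ p ∈ antidiagonal n, ((n : ℝ) + 1) ^ s * (‖coeff p.1 f‖ * ‖coeff p.2 g‖) :=
        Finset.mul_sum ..
    _ ≤ ∑ p ∈ antidiagonal n, (((p.1 : ℝ) + 1) ^ s * ‖coeff p.1 f‖) *
          (((p.2 : ℝ) + 1) ^ s * ‖coeff p.2 g‖) := by
        refine Finset.sum_le_sum fun p hp => ?_
        rw [mul_mul_mul_comm, ← mem_antidiagonal.1 hp]
        gcongr
        exact natCast_add_one_rpow_le_mul hs _ _

theorem summable_norm_coeff (hs : 0 ≤ s) (hf : RPowSummable s f) :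
    Summable fun n => ‖coeff n f‖ :=
  hf.of_nonneg_of_le (fun _ => norm_nonneg _) fun n =>
    le_mul_of_one_le_left (norm_nonneg _) (Real.one_le_rpow (by simp) hs)

theorem tsum_coeff_mul [CompleteSpace A] (hs : 0 ≤ s) (hf : RPowSummable s f)
    (hg : RPowSummable s g) :
    ∑' n, coeff n (f * g) = (∑' n, coeff n f) * ∑' n, coeff n g := by
  simp only [coeff_mul]
  exact (tsum_mul_tsum_eq_tsum_sum_antidiagonal_of_summable_norm (hf.summable_norm_coeff hs)
    (hg.summable_norm_coeff hs)).symm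

/-- A factor with summable coefficients acts on the asymptotics through its value at `1`. -/
theorem tendsto_rpow_smul_coeff_mul [NormedAlgebra ℝ A] [CompleteSpace A] {c : A} (hs : 0 ≤ s)
    (hf : RPowSummable s f)
    (hg : Tendsto (fun n : ℕ => (n : ℝ) ^ s • coeff n g) atTop (𝓝 c)) :
    Tendsto (fun n : ℕ => (n : ℝ) ^ s • coeff n (f * g)) atTop (𝓝 ((∑' n, coeff n f) * c)) := by
  obtain ⟨B, hB⟩ := exists_forall_natCast_add_one_rpow_mul_norm_le hg
  let term (n k : ℕ) : A := if k ≤ n then (n : ℝ) ^ s • (coeff k f * coeff (n - k) g) else 0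
  have hcoeff (n : ℕ) : (n : ℝ) ^ s • coeff n (f * g) = ∑' k, term n k := by
    rw [coeff_mul, Finset.Nat.sum_antidiagonal_eq_sum_range_succ (fun i j => coeff i f * coeff j g),
      Finset.smul_sum,
      tsum_eq_sum (s := Finset.range (n + 1)) fun k hk => if_neg (by simpa using hk)]
    exact Finset.sum_congr rfl fun k hk => (if_pos (Finset.mem_range_succ_iff.1 hk)).symm
  have hterm (k : ℕ) : Tendsto (term · k) atTop (𝓝 (coeff k f * c)) := by
    rw [← tendsto_add_atTop_iff_nat k]
    refine (((tendsto_natCast_add_rpow_smul_iff s k).2 hg).const_mul (coeff k f)).congr fun n => ?_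
    simp [term]
  have hbound (n k : ℕ) : ‖term n k‖ ≤ ((k : ℝ) + 1) ^ s * ‖coeff k f‖ * B := by
    have hB_nonneg : 0 ≤ B := le_trans (by positivity) (hB 0)
    by_cases hk : k ≤ n
    · obtain ⟨m, rfl⟩ := Nat.exists_eq_add_of_le hk
      simp only [term, if_pos hk, Nat.add_sub_cancel_left]
      exact (norm_natCast_rpow_smul_mul_le hs k m _ _).trans (by gcongr; exact hB m)
    · rw [show term n k = 0 from if_neg hk, norm_zero]
      positivity
  simp only [hcoeff, ← (hf.summable_norm_coeff hs).of_norm.tsum_mul_right]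
  exact tendsto_tsum_of_dominated_convergence (Summable.mul_right B hf) hterm
    (.of_forall hbound)

end RPowSummable

end RPowWeights

section BinomialSeries

/-- The power series `(1 - αX) ^ r`. -/
noncomputable def oneSubPow (α r : ℂ) : ℂ⟦X⟧ :=
  rescale (-α) (PowerSeries.binomialSeries ℂ r)

theorem coeff_oneSubPow (α r : ℂ) (n : ℕ) :
    coeff n (oneSubPow α r) = (-α) ^ n * Ring.choose r n := by
  simp [oneSubPow, coeff_rescale]

@[simp]
theorem constantCoeff_oneSubPow (α r : ℂ) : constantCoeff (oneSubPow α r) = 1 := by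
  simp [← coeff_zero_eq_constantCoeff_apply, coeff_oneSubPow]

theorem oneSubPow_add (α r t : ℂ) : oneSubPow α (r + t) = oneSubPow α r * oneSubPow α t := by
  simp [oneSubPow]

theorem oneSubPow_zero (α : ℂ) : oneSubPow α 0 = 1 := by
  simp [oneSubPow]

theorem oneSubPow_one (α : ℂ) : oneSubPow α 1 = 1 - C α * X := by
  have h := binomialSeries_nat (R := ℂ) (A := ℂ) 1
  simp only [Nat.cast_one, pow_one] at h
  simp [oneSubPow, h, rescale_X, sub_eq_add_neg]

theorem oneSubPow_half_sq (α : ℂ) : oneSubPow α (1 / 2) ^ 2 = 1 - C α * X := by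
  rw [sq, ← oneSubPow_add, add_halves, oneSubPow_one]

theorem oneSubPow_neg_half_sq_mul (α : ℂ) :
    oneSubPow α (-1 / 2) ^ 2 * (1 - C α * X) = 1 := by
  rw [sq, ← oneSubPow_add, add_halves, ← oneSubPow_one, ← oneSubPow_add, neg_add_cancel,
    oneSubPow_zero]

theorem summable_natCast_add_one_rpow_mul_geometric (s : ℝ) {q : ℝ} (hq : q ∈ Set.Ioo 0 1) :
    Summable fun n : ℕ => ((n : ℝ) + 1) ^ s * q ^ n := by
  have hnat : Summable fun n : ℕ => ((n : ℝ) + 1) ^ ⌈s⌉₊ * q ^ n := by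
    have hq_norm : ‖q‖ < 1 := by rw [Real.norm_of_nonneg hq.1.le]; exact hq.2
    have h := (summable_nat_add_iff 1).2
      (summable_pow_mul_geometric_of_norm_lt_one ⌈s⌉₊ (r := q) hq_norm)
    refine (h.mul_right q⁻¹).congr fun n => ?_
    rw [pow_succ, mul_assoc, mul_assoc, mul_inv_cancel₀ hq.1.ne', mul_one, Nat.cast_succ]
  have hq_pow (n : ℕ) : 0 ≤ q ^ n := pow_nonneg hq.1.le n
  refine hnat.of_nonneg_of_le (fun n => mul_nonneg (by positivity) (hq_pow n)) fun n => ?_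
  rw [← Real.rpow_natCast _ ⌈s⌉₊]
  exact mul_le_mul_of_nonneg_right
    (Real.rpow_le_rpow_of_exponent_le (by simp) (Nat.le_ceil s)) (hq_pow n)

theorem rpowSummable_oneSubPow {α : ℂ} (hα : ‖α‖ < 1) (r : ℂ) (s : ℝ) :
    RPowSummable s (oneSubPow α r) := by
  have hradius : (‖α‖₊ : ENNReal) < (_root_.binomialSeries ℂ r).radius :=
    lt_of_lt_of_le (by exact_mod_cast hα) binomialSeries_radius_ge_one
  obtain ⟨q, hq, B, -, hB⟩ :=
    (_root_.binomialSeries ℂ r).norm_mul_pow_le_mul_pow_of_lt_radius hradius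
  refine ((summable_natCast_add_one_rpow_mul_geometric s hq).mul_left B).of_nonneg_of_le
    (fun n => by positivity) fun n => ?_
  have hn : ‖coeff n (oneSubPow α r)‖ ≤ B * q ^ n := by
    simpa [coeff_oneSubPow, _root_.binomialSeries, FormalMultilinearSeries.ofScalars_norm,
      mul_comm] using hB n
  calc ((n : ℝ) + 1) ^ s * ‖coeff n (oneSubPow α r)‖ ≤ ((n : ℝ) + 1) ^ s * (B * q ^ n) := by gcongr
    _ = B * (((n : ℝ) + 1) ^ s * q ^ n) := mul_left_comm ..

theorem tsum_coeff_oneSubPow {α : ℂ} (hα : ‖α‖ < 1) (r : ℂ) :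
    ∑' n, coeff n (oneSubPow α r) = (1 - α) ^ r := by
  have h := (Complex.one_add_cpow_hasFPowerSeriesOnBall_zero (a := r)).hasSum (y := -α)
    (by simpa [enorm, ← NNReal.coe_lt_coe] using hα)
  rw [zero_add, ← sub_eq_add_neg] at h
  rw [← h.tsum_eq]
  simp [coeff_oneSubPow, _root_.binomialSeries, FormalMultilinearSeries.coeff_ofScalars]

theorem ascPochhammer_eval_eq_prod_range {R : Type*} [CommSemiring R] (s : R) (n : ℕ) :
    (ascPochhammer R n).eval s = ∏ j ∈ Finset.range n, (s + j) := by
  induction n with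
  | zero => simp
  | succ n ih => rw [ascPochhammer_succ_eval, ih, Finset.prod_range_succ]

theorem multichoose_eq_prod_div_factorial (s : ℝ) (n : ℕ) :
    Ring.multichoose s n = (∏ j ∈ Finset.range n, (s + j)) / n.factorial := by
  rw [eq_div_iff (by positivity), mul_comm, ← nsmul_eq_mul,
    Ring.factorial_nsmul_multichoose_eq_ascPochhammer, Polynomial.ascPochhammer_smeval_eq_eval,
    ascPochhammer_eval_eq_prod_range]

/-- Euler's product formula for `Γ`, read as an asymptotic expansion of the coefficients of
`(1 - X) ^ (-s)`. -/
theorem tendsto_rpow_mul_multichoose {s : ℝ} (hs : ∀ m : ℕ, s ≠ -m) :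
    Tendsto (fun n : ℕ => (n : ℝ) ^ (1 - s) * Ring.multichoose s n) atTop
      (𝓝 (Real.Gamma s)⁻¹) := by
  have hEuler := (Real.GammaSeq_tendsto_Gamma s).inv₀ (Real.Gamma_ne_zero hs)
  have h := (tendsto_natCast_div_add_atTop s).mul hEuler
  rw [one_mul] at h
  refine h.congr' ?_
  filter_upwards [eventually_gt_atTop 0] with n hn
  have hn' : (0 : ℝ) < n := by exact_mod_cast hn
  have hns : s + n ≠ 0 := fun h0 => hs n (eq_neg_of_add_eq_zero_left h0)
  rw [Real.GammaSeq, multichoose_eq_prod_div_factorial, Finset.prod_range_succ,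
    Real.rpow_sub hn', Real.rpow_one, inv_div, add_comm (n : ℝ) s]
  field_simp

theorem tendsto_rpow_smul_coeff_oneSubPow_one {r : ℝ} (hr : ∀ m : ℕ, r ≠ m) :
    Tendsto (fun n : ℕ => (n : ℝ) ^ (r + 1) • coeff n (oneSubPow 1 r)) atTop
      (𝓝 ((Real.Gamma (-r))⁻¹ : ℝ)) := by
  have h := tendsto_rpow_mul_multichoose (s := -r) fun m h => hr m (neg_injective h)
  refine (tendsto_ofReal_iff.2 h).congr fun n => ?_
  have hchoose : (-1) ^ n * Ring.choose r n = Ring.multichoose (-r) n := by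
    have h := Ring.choose_neg' (-r) n
    rw [neg_neg] at h
    rw [h]
    simp [Units.smul_def, ← mul_assoc, ← mul_pow]
  rw [coeff_oneSubPow, ← Complex.ofReal_choose, ← hchoose, Complex.real_smul]
  push_cast
  ring_nf

theorem inv_Gamma_neg_half : (Real.Gamma (-(1 / 2)))⁻¹ = -(2 * √Real.pi)⁻¹ := by
  have h := Real.Gamma_add_one (s := -(1 / 2)) (by norm_num)
  rw [show -(1 / 2) + 1 = (1 / 2 : ℝ) by norm_num, Real.Gamma_one_half_eq] at h
  rw [show Real.Gamma (-(1 / 2)) = -(2 * √Real.pi) by linarith, inv_neg]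

theorem tendsto_rpow_smul_coeff_oneSubPow_one_half :
    Tendsto (fun n : ℕ => (n : ℝ) ^ (3 / 2 : ℝ) • coeff n (oneSubPow 1 (1 / 2))) atTop
      (𝓝 (-(2 * √Real.pi)⁻¹ : ℝ)) := by
  have h := tendsto_rpow_smul_coeff_oneSubPow_one (r := 1 / 2) fun m hm => by
    have : 1 = 2 * m := by exact_mod_cast (show (1 : ℝ) = 2 * m by linarith)
    lia
  rw [inv_Gamma_neg_half, show (1 / 2 + 1 : ℝ) = 3 / 2 by norm_num] at h
  simpa using h

end BinomialSeries

theorem eq_of_sq_eq_sq_of_constantCoeff_add_ne_zero {R : Type*} [CommRing R] [IsDomain R]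
    {f g : R⟦X⟧} (h : f ^ 2 = g ^ 2) (hfg : constantCoeff f + constantCoeff g ≠ 0) : f = g := by
  refine (sq_eq_sq_iff_eq_or_eq_neg.1 h).resolve_right fun hneg => hfg ?_
  rw [hneg, map_neg, neg_add_cancel]

theorem exists_re_eq_normSq_eq {a b : ℝ} (h : a ^ 2 ≤ b) :
    ∃ z : ℂ, z.re = a ∧ Complex.normSq z = b :=
  ⟨⟨a, √(b - a ^ 2)⟩, rfl, by
    rw [Complex.normSq_mk, Real.mul_self_sqrt (sub_nonneg.2 h)]; ring⟩

theorem cpow_half_mul_conj_cpow_half {z : ℂ} (hz : z.arg ≠ Real.pi) :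
    z ^ (1 / 2 : ℂ) * conj z ^ (1 / 2 : ℂ) = ‖z‖ := by
  have hhalf : ((1 / 2 : ℝ) : ℂ) = 1 / 2 := by norm_num
  rw [← hhalf, Complex.conj_cpow _ _ hz, Complex.conj_ofReal, Complex.mul_conj,
    Complex.normSq_eq_norm_sq, Complex.norm_cpow_real, ← Real.sqrt_eq_rpow,
    Real.sq_sqrt (norm_nonneg z)]

section DominantSingularity

variable {ρ : ℝ} {α : ℂ}

/-- `α` is the ratio `ρ / σ` where `ρ`, `σ`, `conj σ` are the roots of `z ^ 3 + z ^ 2 + 3 * z - 1`,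
expressed through Vieta's relations `σ + conj σ = -1 - ρ` and `ρ * (σ * conj σ) = 1`. -/
structure IsConjRootRatio (ρ : ℝ) (α : ℂ) : Prop where
  add_conj : α + conj α = -(ρ ^ 2 + ρ ^ 3)
  mul_conj : α * conj α = ρ ^ 3

theorem exists_isConjRootRatio (hρ : ρ ∈ Set.Ioo (0 : ℝ) 1) :
    ∃ α : ℂ, ‖α‖ < 1 ∧ IsConjRootRatio ρ α := by
  obtain ⟨hρ_pos, hρ_lt⟩ := hρ
  have hdisc : (-(ρ ^ 2 + ρ ^ 3) / 2) ^ 2 ≤ ρ ^ 3 := by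
    have : ρ * (1 + ρ) ^ 2 ≤ 4 := by nlinarith
    nlinarith [pow_pos hρ_pos 3]
  obtain ⟨α, hre, hnorm⟩ := exists_re_eq_normSq_eq hdisc
  refine ⟨α, ?_, ?_, ?_⟩
  · rw [Complex.norm_def, hnorm, Real.sqrt_lt' one_pos]
    exact pow_lt_pow_left₀ hρ_lt hρ_pos.le three_ne_zero |>.trans_eq (by norm_num)
  · rw [Complex.add_conj, hre]
    push_cast
    ring
  · rw [Complex.mul_conj, hnorm, Complex.ofReal_pow]

theorem one_sub_X_mul_conj_factors_eq (hroot : ρ ^ 3 + ρ ^ 2 + 3 * ρ - 1 = 0)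
    (hα : IsConjRootRatio ρ α) :
    (1 - X) * (1 - C α * X) * (1 - C (conj α) * X) =
      1 - 3 * (C (ρ : ℂ) * X) - (C (ρ : ℂ) * X) ^ 2 - (C (ρ : ℂ) * X) ^ 3 := by
  have hsum : C α + C (conj α) = -(C (ρ : ℂ) ^ 2 + C (ρ : ℂ) ^ 3) := by
    simp only [← map_add, ← map_neg, ← map_pow, hα.add_conj]
  have hprod : C α * C (conj α) = C (ρ : ℂ) ^ 3 := by
    rw [← map_mul, ← map_pow, hα.mul_conj]
  have hroot_C : C (ρ : ℂ) ^ 3 + C (ρ : ℂ) ^ 2 + 3 * C (ρ : ℂ) - 1 = 0 := by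
    simpa [show (C 3 : ℂ⟦X⟧) = 3 from map_ofNat C 3] using congrArg (fun x : ℝ => C (x : ℂ)) hroot
  linear_combination (X ^ 2 - X) * hsum + (X ^ 2 - X ^ 3) * hprod + X * hroot_C

/-- The factor of `1 - ρX - 2ρX L(ρX)`, where `L(X)` is the generating function of `L`, that is
analytic beyond the unit disc; the remaining factor is `(1 - X) ^ (1 / 2)`. -/
noncomputable def regularFactor (ρ : ℝ) (α : ℂ) : ℂ⟦X⟧ :=
  oneSubPow α (1 / 2) * oneSubPow (conj α) (1 / 2) * oneSubPow ρ (-1 / 2)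

theorem one_sub_rescale_genFun_L_eq (hroot : ρ ^ 3 + ρ ^ 2 + 3 * ρ - 1 = 0)
    (hα : IsConjRootRatio ρ α) :
    1 - C (ρ : ℂ) * X - 2 * (C (ρ : ℂ) * X) * rescale (ρ : ℂ) (genFun ℂ L) =
      regularFactor ρ α * oneSubPow 1 (1 / 2) := by
  have hdisc := congrArg (rescale (ρ : ℂ)) (genFun_L_discriminant ℂ)
  simp only [map_mul, map_sub, map_pow, map_one, map_ofNat, rescale_X] at hdisc
  rw [← one_sub_X_mul_conj_factors_eq hroot hα] at hdisc
  have hone : oneSubPow 1 (1 / 2) ^ 2 = 1 - X := by simpa using oneSubPow_half_sq 1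
  have hinv := oneSubPow_neg_half_sq_mul ρ
  refine eq_of_sq_eq_sq_of_constantCoeff_add_ne_zero ?_ (by simp [regularFactor])
  rw [regularFactor, mul_pow, mul_pow, mul_pow, oneSubPow_half_sq, oneSubPow_half_sq, hone]
  linear_combination oneSubPow (ρ : ℂ) (-1 / 2) ^ 2 * hdisc -
    (1 - C (ρ : ℂ) * X - 2 * (C (ρ : ℂ) * X) * rescale (ρ : ℂ) (genFun ℂ L)) ^ 2 * hinv

theorem rpowSummable_regularFactor (hρ : |ρ| < 1) (hα : ‖α‖ < 1) {s : ℝ} (hs : 0 ≤ s) :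
    RPowSummable s (regularFactor ρ α) :=
  ((rpowSummable_oneSubPow hα _ s).mul hs
    (rpowSummable_oneSubPow (by simpa using hα) _ s)).mul hs
    (rpowSummable_oneSubPow (by simpa using hρ) _ s)

theorem tsum_coeff_regularFactor (hρ : |ρ| < 1) (hα : ‖α‖ < 1) :
    ∑' n, coeff n (regularFactor ρ α) = (√(Complex.normSq (1 - α) / (1 - ρ)) : ℝ) := by
  have hα' : ‖conj α‖ < 1 := by simpa using hα
  have hρ' : ‖(ρ : ℂ)‖ < 1 := by simpa using hρ
  have hαsum := rpowSummable_oneSubPow hα (1 / 2) 0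
  have hαsum' := rpowSummable_oneSubPow hα' (1 / 2) 0
  have hslit : (1 - α).arg ≠ Real.pi := by
    rw [sub_eq_add_neg]
    exact Complex.slitPlane_arg_ne_pi (Complex.mem_slitPlane_of_norm_lt_one (by simpa using hα))
  have hρ_pos : 0 ≤ 1 - ρ := by linarith [(abs_lt.1 hρ).2]
  have hpole : (1 - ρ : ℂ) ^ (-1 / 2 : ℂ) = ((√(1 - ρ))⁻¹ : ℝ) := by
    rw [Real.sqrt_eq_rpow, ← Real.rpow_neg hρ_pos, Complex.ofReal_cpow hρ_pos]
    push_cast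
    ring_nf
  rw [regularFactor, (hαsum.mul le_rfl hαsum').tsum_coeff_mul le_rfl
      (rpowSummable_oneSubPow hρ' _ 0), hαsum.tsum_coeff_mul le_rfl hαsum',
    tsum_coeff_oneSubPow hα, tsum_coeff_oneSubPow hα', tsum_coeff_oneSubPow hρ', hpole,
    show 1 - conj α = conj (1 - α) by simp, cpow_half_mul_conj_cpow_half hslit,
    Real.sqrt_div (Complex.normSq_nonneg _), ← Complex.norm_def]
  push_cast
  rfl

theorem normSq_one_sub_eq (hroot : ρ ^ 3 + ρ ^ 2 + 3 * ρ - 1 = 0)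
    (hα : IsConjRootRatio ρ α) :
    Complex.normSq (1 - α) = ρ * (3 * ρ ^ 2 + 2 * ρ + 3) := by
  have h : (Complex.normSq (1 - α) : ℂ) = (1 + (ρ ^ 2 + ρ ^ 3) + ρ ^ 3 : ℝ) := by
    rw [← Complex.mul_conj, map_sub, map_one]
    push_cast
    linear_combination hα.mul_conj - hα.add_conj
  rw [Complex.ofReal_inj.1 h]
  linear_combination -hroot

theorem coeff_add_two_one_sub_mul_rescale {R : Type*} [CommRing R] (x : R) (f : R⟦X⟧) (n : ℕ) :
    coeff (n + 2) (1 - C x * X - 2 * (C x * X) * rescale x f) =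
      -(2 * x) * (x ^ (n + 1) * coeff (n + 1) f) := by
  have h : 1 - C x * X - 2 * (C x * X) * rescale x f =
      1 - C x * X - C (2 * x) * (X * rescale x f) := by
    rw [map_mul, map_ofNat]
    ring
  rw [h, map_sub, map_sub, coeff_C_mul, coeff_C_mul, coeff_succ_X_mul, coeff_rescale]
  simp [coeff_one, coeff_X]

theorem L_asymptotics (hρ : ρ ∈ Set.Ioo (0 : ℝ) 1) (hroot : ρ ^ 3 + ρ ^ 2 + 3 * ρ - 1 = 0) :
    Tendsto (fun n : ℕ => (n : ℝ) ^ (3 / 2 : ℝ) • (ρ ^ n * L n)) atTop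
      (𝓝 (√(ρ * (3 * ρ ^ 2 + 2 * ρ + 3) / (1 - ρ)) / (4 * ρ * √Real.pi))) := by
  obtain ⟨α, hα_norm, hα⟩ := exists_isConjRootRatio hρ
  have hρ_abs : |ρ| < 1 := by rw [abs_of_pos hρ.1]; exact hρ.2
  have hs : (0 : ℝ) ≤ 3 / 2 := by norm_num
  have hlim := (rpowSummable_regularFactor hρ_abs hα_norm hs).tendsto_rpow_smul_coeff_mul hs
    tendsto_rpow_smul_coeff_oneSubPow_one_half
  push_cast at hlim
  rw [← one_sub_rescale_genFun_L_eq hroot hα, tsum_coeff_regularFactor hρ_abs hα_norm,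
    normSq_one_sub_eq hroot hα, ← tendsto_natCast_rpow_smul_shift_iff _ 2] at hlim
  rw [← tendsto_natCast_rpow_smul_shift_iff _ 1, ← tendsto_ofReal_iff]
  have hρ_ne : (ρ : ℂ) ≠ 0 := Complex.ofReal_ne_zero.2 hρ.1.ne'
  convert hlim.const_mul (-(2 * ρ : ℂ)⁻¹) using 2 with n
  · rw [coeff_add_two_one_sub_mul_rescale, coeff_genFun, Complex.real_smul, smul_eq_mul]
    push_cast
    field_simp
  · push_cast
    ring

theorem tendsto_K_of_tendsto_L {c s : ℝ}
    (hL : Tendsto (fun n : ℕ => (n : ℝ) ^ s • (ρ ^ n * L n)) atTop (𝓝 c)) :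
    Tendsto (fun n : ℕ => (n : ℝ) ^ s • (ρ ^ n * K n)) atTop (𝓝 (ρ * c)) := by
  rw [← tendsto_natCast_rpow_smul_shift_iff _ 1] at hL
  rw [← tendsto_natCast_rpow_smul_shift_iff _ 2]
  refine (hL.const_mul ρ).congr fun n => ?_
  rw [K_add_two, smul_eq_mul, smul_eq_mul]
  ring

theorem rescale_genFun_H_eq {R : Type*} [CommRing R] (x : R) :
    rescale x (genFun R H) = mk (fun n => x ^ n) * rescale x (genFun R K) := by
  have hgeom : mk (fun n => x ^ n) = rescale x (mk (1 : ℕ → R)) := by simp [rescale_mk]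
  rw [hgeom, ← map_mul]
  congr 1
  linear_combination mk 1 * genFun_H_eq R - genFun R H * mk_one_mul_one_sub_eq_one R

theorem tendsto_H_of_tendsto_K {c s : ℝ} (hρ : ρ ∈ Set.Ioo (0 : ℝ) 1) (hs : 0 ≤ s)
    (hK : Tendsto (fun n : ℕ => (n : ℝ) ^ s • (ρ ^ n * K n)) atTop (𝓝 c)) :
    Tendsto (fun n : ℕ => (n : ℝ) ^ s • (ρ ^ n * H n)) atTop (𝓝 (c / (1 - ρ))) := by
  have hgeom : RPowSummable s (mk fun n => ρ ^ n) := by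
    simpa [RPowSummable, abs_of_pos hρ.1] using summable_natCast_add_one_rpow_mul_geometric s hρ
  have h := hgeom.tendsto_rpow_smul_coeff_mul (g := rescale ρ (genFun ℝ K)) hs (c := c)
    (by simpa [coeff_rescale] using hK)
  rw [← rescale_genFun_H_eq] at h
  simpa [coeff_rescale, tsum_geometric_of_lt_one hρ.1.le hρ.2, div_eq_inv_mul] using h

end DominantSingularity

theorem H_asymptotics (ρ C : ℝ)
    (hρ_mem : ρ ∈ Set.Ioo (0 : ℝ) 1)
    (hρ_root : ρ ^ 3 + ρ ^ 2 + 3 * ρ - 1 = 0)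
    (hC : C = Real.sqrt (ρ * (3 * ρ ^ 2 + 2 * ρ + 3) / (1 - ρ)) / (4 * ρ * Real.sqrt Real.pi)) :
    Filter.Tendsto (fun n : ℕ => (H n : ℝ) * ρ ^ n * (n : ℝ) ^ ((3 : ℝ) / 2))
      Filter.atTop (nhds (C * ρ / (1 - ρ))) := by
  have hL := L_asymptotics hρ_mem hρ_root
  rw [← hC] at hL
  have hK := tendsto_K_of_tendsto_L hL
  have hH := tendsto_H_of_tendsto_K hρ_mem (by norm_num) hK
  rw [mul_comm ρ C] at hH
  refine hH.congr fun n => ?_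
  rw [smul_eq_mul]
  ring
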